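/- Let ζ, γ ∈ 𝒫₁(B) on a separable Banach space B. Then ζ ≤_cx γ and ζ is finitely supported if and only if there exist a probability π on B × B with second marginal γ and a finite Borel partition (P_i) of B such that ζ = Σ_{i : π(P_i × B)>0} π(P_i × B) · δ_{y_i}, where y_i := (1/π(P_i × B)) ∫_{P_i × B} y dπ(x,y). -/

import Mathlib

open MeasureTheory

/-! Let `ζ = ∑ i, w i • δ (x i) ≤_cx γ`. On tuples `a` of continuous affine functions, the linear
functional `a ↦ ∑ i, w i * a i (x i)` is dominated by the sublinear functional
`h ↦ ∫ y, ⨆ i, h i y ∂γ`, because `⨆ i, a i` is convex and Lipschitz. By Hahn–Banach it extends to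
tuples in `L¹(γ)` with the same domination, and any functional so dominated integrates the entries
against nonnegative densities `φ i` with `∑ i, φ i = 1`. The measures `μ i = φ i • γ` have mass
`w i` and barycentre `x i`, so `∑ i, δ (x i) ⊗ μ i` is the required coupling. Conversely, the
convex order is Jensen's inequality on each cell. -/

open scoped ENNReal NNReal

theorem exists_linearMap_comp_eq_and_le_sublinear {V E : Type*} [AddCommGroup V] [Module ℝ V]
    [AddCommGroup E] [Module ℝ E] (A : V →ₗ[ℝ] E) (c : V →ₗ[ℝ] ℝ) {N : E → ℝ}
    (N_hom : ∀ r : ℝ, 0 < r → ∀ x, N (r • x) = r * N x) (N_add : ∀ x y, N (x + y) ≤ N x + N y)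
    (hc : ∀ v, c v ≤ N (A v)) :
    ∃ Λ : E →ₗ[ℝ] ℝ, Λ ∘ₗ A = c ∧ ∀ x, Λ x ≤ N x := by
  have N_zero : N 0 = 0 := by
    have := N_hom 2 two_pos 0
    rw [smul_zero] at this
    linarith
  have c_mem : c ∈ LinearMap.range A.dualMap := by
    rw [LinearMap.range_dualMap_eq_dualAnnihilator_ker, Submodule.mem_dualAnnihilator]
    intro v hv
    have hv_neg : A (-v) = 0 := by rw [map_neg, LinearMap.mem_ker.1 hv, neg_zero]
    have h_le := hc v
    have h_neg_le := hc (-v)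
    rw [LinearMap.mem_ker.1 hv, N_zero] at h_le
    rw [hv_neg, N_zero, map_neg] at h_neg_le
    linarith
  obtain ⟨c', rfl⟩ := c_mem
  obtain ⟨Λ, hΛ_eq, hΛ_le⟩ := exists_extension_of_le_sublinear
    ⟨LinearMap.range A, c'.domRestrict _⟩ N N_hom N_add (by rintro ⟨_, v, rfl⟩; exact hc v)
  exact ⟨Λ, LinearMap.ext fun v ↦ hΛ_eq ⟨A v, v, rfl⟩, hΛ_le⟩

section L1

variable {α : Type*} [MeasurableSpace α] {μ : Measure α}

theorem continuousLinearMap_ext_indicatorConstLp {F : Type*} [AddCommMonoid F] [Module ℝ F]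
    [TopologicalSpace F] [T2Space F] {p : ℝ≥0∞} [Fact (1 ≤ p)] (hp : p ≠ ∞) {Λ Ψ : Lp ℝ p μ →L[ℝ] F}
    (h : ∀ (s : Set α) (hs : MeasurableSet s) (hμs : μ s ≠ ∞),
      Λ (indicatorConstLp p hs hμs 1) = Ψ (indicatorConstLp p hs hμs 1)) : Λ = Ψ := by
  ext f
  induction f using Lp.induction hp with
  | @indicatorConst c s hs hμs =>
    have h_smul : indicatorConstLp p hs hμs.ne c = c • indicatorConstLp p hs hμs.ne (1 : ℝ) := by
      rw [indicatorConstLp, indicatorConstLp, ← MemLp.toLp_const_smul]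
      congr 1
      ext x
      by_cases hx : x ∈ s <;> simp [hx]
    rw [Lp.simpleFunc.coe_indicatorConst, h_smul, map_smul, map_smul, h]
  | add hf hg _ hf_eq hg_eq => rw [map_add, map_add, hf_eq, hg_eq]
  | isClosed => exact isClosed_eq Λ.continuous Ψ.continuous

theorem integral_mul_indicatorConstLp_one {p : ℝ≥0∞} {s : Set α} (hs : MeasurableSet s)
    (hμs : μ s ≠ ∞) (φ : α → ℝ) :
    ∫ x, φ x * indicatorConstLp p hs hμs (1 : ℝ) x ∂μ = ∫ x in s, φ x ∂μ := by
  rw [← integral_indicator hs]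
  refine integral_congr_ae ?_
  filter_upwards [indicatorConstLp_coeFn (p := p) (hs := hs) (hμs := hμs) (c := (1 : ℝ))] with x hx
  rw [hx, ← Set.indicator_mul_right]
  simp only [mul_one]

variable [IsFiniteMeasure μ]

/- `L² ⊆ L¹` over a finite measure, so the functional is represented on `L²` by Fréchet–Riesz. -/
theorem exists_integrable_forall_indicatorConstLp_eq_setIntegral (Λ : Lp ℝ 1 μ →L[ℝ] ℝ) :
    ∃ φ : α → ℝ, Measurable φ ∧ Integrable φ μ ∧ ∀ (s : Set α) (hs : MeasurableSet s),
      Λ (indicatorConstLp 1 hs (measure_ne_top μ s) 1) = ∫ x in s, φ x ∂μ := by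
  let J : Lp ℝ 2 μ →L[ℝ] Lp ℝ 1 μ :=
    (ContinuousLinearMap.mul ℝ ℝ).holderL μ 2 2 1 (Lp.const 2 μ 1)
  let φ : Lp ℝ 2 μ := (InnerProductSpace.toDual ℝ (Lp ℝ 2 μ)).symm (Λ ∘L J)
  refine ⟨φ, (Lp.stronglyMeasurable φ).measurable, (Lp.memLp φ).integrable one_le_two,
    fun s hs ↦ ?_⟩
  have hJ : J (indicatorConstLp 2 hs (measure_ne_top μ s) 1) =
      indicatorConstLp 1 hs (measure_ne_top μ s) 1 := by
    refine Lp.ext ?_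
    filter_upwards [(ContinuousLinearMap.mul ℝ ℝ).coeFn_holder (r := 1) (Lp.const 2 μ 1)
        (indicatorConstLp 2 hs (measure_ne_top μ s) (1 : ℝ)),
      Lp.coeFn_const (p := 2) (μ := μ) (c := (1 : ℝ)),
      indicatorConstLp_coeFn (p := 1) (hs := hs) (hμs := measure_ne_top μ s) (c := (1 : ℝ)),
      indicatorConstLp_coeFn (p := 2) (hs := hs) (hμs := measure_ne_top μ s) (c := (1 : ℝ))]
      with x hJ h_const h₁ h₂
    refine hJ.trans ?_
    rw [h_const, h₁, h₂]
    simp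
  rw [← hJ, ← L2.inner_indicatorConstLp_one hs (measure_ne_top μ s), real_inner_comm]
  simp only [φ, InnerProductSpace.toDual_symm_apply, ContinuousLinearMap.comp_apply]

theorem exists_bounded_forall_eq_integral_mul (Λ : Lp ℝ 1 μ →L[ℝ] ℝ) :
    ∃ φ : α → ℝ, Measurable φ ∧ (∀ᵐ x ∂μ, ‖φ x‖ ≤ ‖Λ‖) ∧ ∀ f, Λ f = ∫ x, φ x * f x ∂μ := by
  obtain ⟨φ, hφ_meas, hφ_int, hφ⟩ := exists_integrable_forall_indicatorConstLp_eq_setIntegral Λ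
  have h_abs_le (s : Set α) (hs : MeasurableSet s) :
      |∫ x in s, φ x ∂μ| ≤ ∫ _ in s, ‖Λ‖ ∂μ := by
    rw [← hφ s hs, setIntegral_const, smul_eq_mul, mul_comm]
    refine (Λ.le_opNorm _).trans (le_of_eq ?_)
    simp [norm_indicatorConstLp]
  have hφ_bound : ∀ᵐ x ∂μ, ‖φ x‖ ≤ ‖Λ‖ := by
    have h_le : φ ≤ᵐ[μ] fun _ ↦ ‖Λ‖ :=
      ae_le_of_forall_setIntegral_le hφ_int (integrable_const _) fun s hs _ ↦
        (abs_le.1 (h_abs_le s hs)).2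
    have h_neg_le : (fun _ ↦ -‖Λ‖) ≤ᵐ[μ] φ :=
      ae_le_of_forall_setIntegral_le (integrable_const _) hφ_int fun s hs _ ↦ by
        simpa [integral_neg] using (abs_le.1 (h_abs_le s hs)).1
    filter_upwards [h_le, h_neg_le] with x hx hx_neg
    exact abs_le.2 ⟨hx_neg, hx⟩
  have hφ_memLp : MemLp φ ∞ μ := memLp_top_of_bound hφ_meas.aestronglyMeasurable _ hφ_bound
  let Ψ : Lp ℝ 1 μ →L[ℝ] ℝ := (ContinuousLinearMap.mul ℝ ℝ).lpPairing μ ∞ 1 hφ_memLp.toLp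
  have hΨ (f : Lp ℝ 1 μ) : Ψ f = ∫ x, φ x * f x ∂μ := by
    rw [ContinuousLinearMap.lpPairing_eq_integral]
    refine integral_congr_ae ?_
    filter_upwards [hφ_memLp.coeFn_toLp] with x hx
    rw [hx, ContinuousLinearMap.mul_apply']
  refine ⟨φ, hφ_meas, hφ_bound, fun f ↦ ?_⟩
  rw [← hΨ]
  congr 1
  refine continuousLinearMap_ext_indicatorConstLp ENNReal.one_ne_top fun s hs _ ↦ ?_
  rw [hφ s hs, hΨ, integral_mul_indicatorConstLp_one]

end L1

section Strassen

variable {α ι : Type*} [MeasurableSpace α] {γ : Measure α}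

theorem sum_withDensity_ofReal_eq [Fintype ι] {φ : ι → α → ℝ} (hφ_meas : ∀ i, Measurable (φ i))
    (hφ_nonneg : ∀ i, 0 ≤ᵐ[γ] φ i) (hφ_sum : ∀ᵐ x ∂γ, ∑ i, φ i x = 1) :
    ∑ i, γ.withDensity (fun x ↦ ENNReal.ofReal (φ i x)) = γ := by
  rw [← Measure.sum_fintype, ← withDensity_tsum fun i ↦ (hφ_meas i).ennreal_ofReal]
  conv_rhs => rw [← withDensity_one (μ := γ)]
  refine withDensity_congr_ae ?_
  filter_upwards [ae_all_iff.2 hφ_nonneg, hφ_sum] with x hx hsum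
  rw [tsum_fintype, Finset.sum_apply, ← ENNReal.ofReal_sum_of_nonneg fun j _ ↦ hx j, hsum,
    ENNReal.ofReal_one, Pi.one_apply]

theorem integral_withDensity_ofReal {F : Type*} [NormedAddCommGroup F] [NormedSpace ℝ F]
    {φ : α → ℝ} (hφ_meas : Measurable φ) (hφ_nonneg : 0 ≤ᵐ[γ] φ) (f : α → F) :
    ∫ x, f x ∂γ.withDensity (fun x ↦ ENNReal.ofReal (φ x)) = ∫ x, φ x • f x ∂γ := by
  rw [integral_withDensity_eq_integral_toReal_smul hφ_meas.ennreal_ofReal (by simp)]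
  refine integral_congr_ae ?_
  filter_upwards [hφ_nonneg] with x hx
  rw [ENNReal.toReal_ofReal hx]

variable [Nonempty ι]

theorem integrable_iSup_of_finite [Finite ι] {f : ι → α → ℝ} (hf : ∀ i, Integrable (f i) γ) :
    Integrable (fun x ↦ ⨆ i, f i x) γ := by
  have := Fintype.ofFinite ι
  refine (integrable_finsetSum Finset.univ fun i _ ↦ (hf i).norm).mono'
    (AEMeasurable.iSup fun i ↦ (hf i).aemeasurable).aestronglyMeasurable (.of_forall fun x ↦ ?_)
  obtain ⟨i, hi⟩ := exists_eq_ciSup_of_finite (f := fun i ↦ f i x)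
  rw [← hi]
  exact Finset.single_le_sum (f := fun j ↦ ‖f j x‖) (fun j _ ↦ norm_nonneg _) (Finset.mem_univ i)

theorem exists_linearMap_comp_eq_and_le_integral_iSup [Finite ι] {V : Type*} [AddCommGroup V]
    [Module ℝ V] (A : V →ₗ[ℝ] ι → Lp ℝ 1 γ) (c : V →ₗ[ℝ] ℝ)
    (hc : ∀ v, c v ≤ ∫ x, ⨆ i, A v i x ∂γ) :
    ∃ Λ : (ι → Lp ℝ 1 γ) →ₗ[ℝ] ℝ, Λ ∘ₗ A = c ∧ ∀ h, Λ h ≤ ∫ x, ⨆ i, h i x ∂γ := by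
  have h_int (h : ι → Lp ℝ 1 γ) : Integrable (fun x ↦ ⨆ i, h i x) γ :=
    integrable_iSup_of_finite fun i ↦ L1.integrable_coeFn (h i)
  refine exists_linearMap_comp_eq_and_le_sublinear A c (fun r hr h ↦ ?_) (fun h k ↦ ?_) hc
  · rw [← integral_const_mul]
    refine integral_congr_ae ?_
    filter_upwards [ae_all_iff.2 fun i ↦ Lp.coeFn_smul r (h i)] with x hx
    simp only [Pi.smul_apply, hx, smul_eq_mul, Real.mul_iSup_of_nonneg hr.le]
  · rw [← integral_add (h_int h) (h_int k)]
    refine integral_mono_ae (h_int _) ((h_int h).add (h_int k)) ?_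
    filter_upwards [ae_all_iff.2 fun i ↦ Lp.coeFn_add (h i) (k i)] with x hx
    simp only [Pi.add_apply, hx]
    exact ciSup_le fun i ↦ add_le_add (le_ciSup (Set.finite_range fun j ↦ h j x).bddAbove i)
      (le_ciSup (Set.finite_range fun j ↦ k j x).bddAbove i)

theorem map_single_le_integral_max_zero_of_le_integral_iSup [Finite ι] [DecidableEq ι]
    {Λ : (ι → Lp ℝ 1 γ) →ₗ[ℝ] ℝ} (hΛ : ∀ h, Λ h ≤ ∫ x, ⨆ i, h i x ∂γ) (i : ι) (f : Lp ℝ 1 γ) :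
    Λ (Pi.single i f) ≤ ∫ x, max (f x) 0 ∂γ := by
  refine (hΛ _).trans (integral_mono_ae
    (integrable_iSup_of_finite fun j ↦ L1.integrable_coeFn _) (L1.integrable_coeFn f).pos_part ?_)
  filter_upwards [Lp.coeFn_zero ℝ 1 γ] with x hx
  refine ciSup_le fun j ↦ ?_
  obtain rfl | hji := eq_or_ne j i
  · rw [Pi.single_eq_same]
    exact le_max_left _ _
  · rw [Pi.single_eq_of_ne hji, hx]
    exact le_max_right _ _

theorem abs_map_single_le_norm_of_le_integral_iSup [Finite ι] [DecidableEq ι]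
    {Λ : (ι → Lp ℝ 1 γ) →ₗ[ℝ] ℝ} (hΛ : ∀ h, Λ h ≤ ∫ x, ⨆ i, h i x ∂γ) (i : ι) (f : Lp ℝ 1 γ) :
    |Λ (Pi.single i f)| ≤ ‖f‖ := by
  have h_le (g : Lp ℝ 1 γ) : Λ (Pi.single i g) ≤ ‖g‖ := by
    rw [L1.norm_eq_integral_norm]
    refine (map_single_le_integral_max_zero_of_le_integral_iSup hΛ i g).trans
      (integral_mono (L1.integrable_coeFn g).pos_part (L1.integrable_coeFn g).norm fun x ↦ ?_)
    exact max_le (le_abs_self _) (abs_nonneg _)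
  refine abs_le'.2 ⟨h_le f, ?_⟩
  simpa only [Pi.single_neg, map_neg, norm_neg] using h_le (-f)

theorem map_single_nonneg_of_le_integral_iSup [Finite ι] [DecidableEq ι]
    {Λ : (ι → Lp ℝ 1 γ) →ₗ[ℝ] ℝ} (hΛ : ∀ h, Λ h ≤ ∫ x, ⨆ i, h i x ∂γ) (i : ι) {f : Lp ℝ 1 γ}
    (hf : 0 ≤ f) : 0 ≤ Λ (Pi.single i f) := by
  have h_le := map_single_le_integral_max_zero_of_le_integral_iSup hΛ i (-f)
  have h_zero : ∫ x, max ((-f : Lp ℝ 1 γ) x) 0 ∂γ = 0 := by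
    refine integral_eq_zero_of_ae ?_
    filter_upwards [Lp.coeFn_neg f, (Lp.coeFn_nonneg f).2 hf] with x hx_neg hx
    rw [hx_neg]
    exact max_eq_right (neg_nonpos.2 hx)
  rwa [Pi.single_neg, map_neg, h_zero, neg_nonpos] at h_le

theorem map_const_eq_integral_of_le_integral_iSup {Λ : (ι → Lp ℝ 1 γ) →ₗ[ℝ] ℝ}
    (hΛ : ∀ h, Λ h ≤ ∫ x, ⨆ i, h i x ∂γ) (f : Lp ℝ 1 γ) :
    Λ (fun _ ↦ f) = ∫ x, f x ∂γ := by
  have h_le (g : Lp ℝ 1 γ) : Λ (fun _ ↦ g) ≤ ∫ x, g x ∂γ := by simpa using hΛ fun _ ↦ g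
  refine le_antisymm (h_le f) (neg_le_neg_iff.1 ?_)
  calc -Λ (fun _ ↦ f) = Λ (fun _ ↦ -f) := (map_neg Λ _).symm
    _ ≤ ∫ x, (-f : Lp ℝ 1 γ) x ∂γ := h_le (-f)
    _ = -∫ x, f x ∂γ := by rw [integral_congr_ae (Lp.coeFn_neg f)]; exact integral_neg _

theorem exists_densities_of_le_integral_iSup [Fintype ι] [IsFiniteMeasure γ]
    {Λ : (ι → Lp ℝ 1 γ) →ₗ[ℝ] ℝ} (hΛ : ∀ h, Λ h ≤ ∫ x, ⨆ i, h i x ∂γ) :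
    ∃ φ : ι → α → ℝ, (∀ i, Measurable (φ i)) ∧ (∀ i, 0 ≤ᵐ[γ] φ i) ∧
      (∀ᵐ x ∂γ, ∑ i, φ i x = 1) ∧ ∀ h, Λ h = ∑ i, ∫ x, φ i x * h i x ∂γ := by
  classical
  let Λ' (i : ι) : Lp ℝ 1 γ →L[ℝ] ℝ := (Λ ∘ₗ LinearMap.single ℝ _ i).mkContinuous 1 fun f ↦ by
    simpa using abs_map_single_le_norm_of_le_integral_iSup hΛ i f
  choose φ hφ_meas hφ_bound hφ using fun i ↦ exists_bounded_forall_eq_integral_mul (Λ' i)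
  have hφ_int (i : ι) : Integrable (φ i) γ :=
    .of_bound (hφ_meas i).aestronglyMeasurable _ (hφ_bound i)
  have hΛ_eq (h : ι → Lp ℝ 1 γ) : Λ h = ∑ i, ∫ x, φ i x * h i x ∂γ := by
    conv_lhs => rw [← Finset.univ_sum_single h, map_sum]
    exact Finset.sum_congr rfl fun i _ ↦ hφ i (h i)
  refine ⟨φ, hφ_meas, fun i ↦ ?_, ?_, hΛ_eq⟩
  · refine ae_nonneg_of_forall_setIntegral_nonneg (hφ_int i) fun s hs hγs ↦ ?_
    rw [← integral_mul_indicatorConstLp_one (p := 1) hs hγs.ne, ← hφ i]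
    refine map_single_nonneg_of_le_integral_iSup hΛ i ((Lp.coeFn_nonneg _).1 ?_)
    filter_upwards [indicatorConstLp_coeFn (p := 1) (hs := hs) (hμs := hγs.ne) (c := (1 : ℝ))]
      with x hx
    rw [hx]
    exact Set.indicator_nonneg (fun _ _ ↦ zero_le_one) x
  · refine (integrable_finsetSum _ fun i _ ↦ hφ_int i).ae_eq_of_forall_setIntegral_eq _ _
      (integrable_const 1) fun s hs hγs ↦ ?_
    calc ∫ x in s, ∑ i, φ i x ∂γ = ∑ i, ∫ x in s, φ i x ∂γ :=
          integral_finsetSum _ fun i _ ↦ (hφ_int i).integrableOn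
      _ = Λ fun _ ↦ indicatorConstLp 1 hs hγs.ne 1 := by
          simp only [hΛ_eq, integral_mul_indicatorConstLp_one]
      _ = ∫ x, 1 * indicatorConstLp 1 hs hγs.ne (1 : ℝ) x ∂γ := by
          simp only [map_const_eq_integral_of_le_integral_iSup hΛ, one_mul]
      _ = ∫ _ in s, 1 ∂γ := integral_mul_indicatorConstLp_one hs hγs.ne fun _ ↦ 1

theorem exists_sum_measure_eq_of_le_integral_iSup [Fintype ι] [IsFiniteMeasure γ] {V : Type*}
    [AddCommGroup V] [Module ℝ V] (A : V →ₗ[ℝ] ι → α → ℝ) (hA : ∀ v i, Integrable (A v i) γ)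
    (c : V →ₗ[ℝ] ℝ) (hc : ∀ v, c v ≤ ∫ x, ⨆ i, A v i x ∂γ) :
    ∃ μ : ι → Measure α, ∑ i, μ i = γ ∧ ∀ v, c v = ∑ i, ∫ x, A v i x ∂μ i := by
  let A₁ : V →ₗ[ℝ] ι → Lp ℝ 1 γ :=
    { toFun v i := (hA v i).toL1
      map_add' v v' := by
        ext1 i
        simp only [map_add, Pi.add_apply, Integrable.toL1_add _ _ (hA v i) (hA v' i)]
      map_smul' r v := by
        ext1 i
        simp only [map_smul, Pi.smul_apply, RingHom.id_apply]
        exact Integrable.toL1_smul _ (hA v i) r }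
  have hA₁ (v : V) (i : ι) : A₁ v i =ᵐ[γ] A v i := (hA v i).coeFn_toL1
  have hc₁ (v : V) : c v ≤ ∫ x, ⨆ i, A₁ v i x ∂γ := by
    refine (hc v).trans_eq (integral_congr_ae ?_)
    filter_upwards [ae_all_iff.2 (hA₁ v)] with x hx
    simp only [hx]
  obtain ⟨Λ, rfl, hΛ⟩ := exists_linearMap_comp_eq_and_le_integral_iSup A₁ c hc₁
  obtain ⟨φ, hφ_meas, hφ_nonneg, hφ_sum, hφ⟩ := exists_densities_of_le_integral_iSup hΛ
  refine ⟨_, sum_withDensity_ofReal_eq hφ_meas hφ_nonneg hφ_sum, fun v ↦ ?_⟩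
  rw [LinearMap.comp_apply, hφ]
  refine Finset.sum_congr rfl fun i _ ↦ ?_
  rw [integral_withDensity_ofReal (hφ_meas i) (hφ_nonneg i)]
  exact integral_congr_ae ((hA₁ v i).mono fun x hx ↦ congrArg (φ i x * ·) hx)

end Strassen

section FiniteSupremum

variable {E ι : Type*} [Finite ι] [Nonempty ι] {f : ι → E → ℝ}

theorem lipschitzWith_iSup_of_finite [PseudoMetricSpace E] {K : ℝ≥0}
    (hf : ∀ i, LipschitzWith K (f i)) : LipschitzWith K fun x ↦ ⨆ i, f i x :=
  .of_le_add_mul K fun x y ↦ ciSup_le fun i ↦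
    ((hf i).le_add_mul x y).trans <| by
      gcongr
      exact le_ciSup (Set.finite_range fun j ↦ f j y).bddAbove i

theorem convexOn_iSup_of_finite [AddCommMonoid E] [SMul ℝ E] {s : Set E}
    (hf : ∀ i, ConvexOn ℝ s (f i)) : ConvexOn ℝ s fun x ↦ ⨆ i, f i x := by
  refine ⟨(hf (Classical.arbitrary ι)).1, fun x hx y hy a b ha hb hab ↦ ciSup_le fun i ↦ ?_⟩
  calc f i (a • x + b • y) ≤ a • f i x + b • f i y := (hf i).2 hx hy ha hb hab
    _ ≤ a • (⨆ j, f j x) + b • ⨆ j, f j y := by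
      gcongr
      · exact le_ciSup (Set.finite_range fun j ↦ f j x).bddAbove i
      · exact le_ciSup (Set.finite_range fun j ↦ f j y).bddAbove i

end FiniteSupremum

section Affine

variable {E F : Type*} [NormedAddCommGroup E] [NormedSpace ℝ E] [NormedAddCommGroup F]

theorem lipschitzWith_nnnorm_contLinear [NormedSpace ℝ F] (a : E →ᴬ[ℝ] F) :
    LipschitzWith ‖a.contLinear‖₊ a :=
  .of_dist_le_mul fun x y ↦ by
    rw [dist_eq_norm, dist_eq_norm, coe_nnnorm, ← vsub_eq_sub (a x), ← a.contLinear_map_vsub]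
    exact a.contLinear.le_opNorm _

theorem convexOn_univ_continuousAffineMap (a : E →ᴬ[ℝ] ℝ) : ConvexOn ℝ Set.univ a :=
  (convexOn_id convex_univ).comp_affineMap a.toAffineMap

theorem integrable_comp_of_lipschitzWith {Ω G : Type*} [MeasurableSpace Ω] {μ : Measure Ω}
    [IsFiniteMeasure μ] [NormedAddCommGroup G] {f : F → G} {K : ℝ≥0} (hf : LipschitzWith K f)
    {Y : Ω → F} (hY : Integrable Y μ) : Integrable (fun ω ↦ f (Y ω)) μ := by
  refine ((integrable_const ‖f 0‖).add (hY.norm.const_mul K)).mono'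
    (hf.continuous.comp_aestronglyMeasurable hY.aestronglyMeasurable) (.of_forall fun ω ↦ ?_)
  calc ‖f (Y ω)‖ ≤ ‖f 0‖ + ‖f (Y ω) - f 0‖ := norm_le_norm_add_norm_sub' _ _
    _ ≤ ‖f 0‖ + K * ‖Y ω‖ := by simpa using hf.norm_sub_le (Y ω) 0

end Affine

/-- The convex order `ζ ≤_cx γ`, tested on Lipschitz convex functions. Lipschitz functions are
integrable against measures of finite first moment; against other measures the Bochner integral
may take its junk value `0`. -/
def ConvexOrderLE {B : Type*} [NormedAddCommGroup B] [NormedSpace ℝ B] [MeasurableSpace B]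
    (ζ γ : Measure B) : Prop :=
  ∀ f : B → ℝ, (∃ K, LipschitzWith K f) → ConvexOn ℝ Set.univ f → ∫ x, f x ∂ζ ≤ ∫ x, f x ∂γ

/-- `ζ` is the law of the barycentres `y i` of the second coordinate of a coupling `π` with second
marginal `γ`, over the cells of a finite measurable partition `P` of the first coordinate. Cells of
`π`-measure zero carry no atom, so `y i` is arbitrary there. -/
def IsBarycentricQuantisation {B : Type*} [NormedAddCommGroup B] [NormedSpace ℝ B]
    [MeasurableSpace B] (ζ γ : Measure B) : Prop :=
  ∃ π : Measure (B × B), IsProbabilityMeasure π ∧ π.snd = γ ∧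
    ∃ n : ℕ, ∃ P : Fin n → Set B, (∀ i, MeasurableSet (P i)) ∧
      Pairwise (Function.onFun Disjoint P) ∧ (⋃ i, P i = Set.univ) ∧
      ∃ y : Fin n → B,
        (∀ i, π (P i ×ˢ Set.univ) ≠ 0 →
          y i = (π (P i ×ˢ Set.univ)).toReal⁻¹ •
            ∫ q in P i ×ˢ (Set.univ : Set B), q.2 ∂π) ∧
        ζ = ∑ i ∈ Finset.univ.filter (fun i => π (P i ×ˢ Set.univ) ≠ 0),
          π (P i ×ˢ Set.univ) • Measure.dirac (y i)

section FiniteStrassen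

theorem integral_sum_smul_dirac {ι α F : Type*} [MeasurableSpace α] [NormedAddCommGroup F]
    [NormedSpace ℝ F] [CompleteSpace F] (s : Finset ι) {w : ι → ℝ≥0∞} (hw : ∀ i ∈ s, w i ≠ ∞)
    (y : ι → α) {f : α → F} (hf : StronglyMeasurable f) :
    ∫ x, f x ∂(∑ i ∈ s, w i • Measure.dirac (y i)) = ∑ i ∈ s, (w i).toReal • f (y i) := by
  rw [integral_finsetSum_measure fun i hi ↦
    (integrable_dirac' hf enorm_lt_top).smul_measure (hw i hi)]
  simp only [integral_smul_measure, integral_dirac' _ _ hf]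

variable {B ι : Type*} [NormedAddCommGroup B] [NormedSpace ℝ B] [MeasurableSpace B]
  [Fintype ι] [Nonempty ι] {γ : Measure B}

theorem sum_mul_le_integral_iSup_of_convexOrderLE [OpensMeasurableSpace B] {w : ι → ℝ≥0∞}
    (hw : ∀ i, w i ≠ ∞) {x : ι → B} (h_cx : ConvexOrderLE (∑ i, w i • Measure.dirac (x i)) γ)
    (a : ι → B →ᴬ[ℝ] ℝ) : ∑ i, (w i).toReal * a i (x i) ≤ ∫ y, ⨆ i, a i y ∂γ := by
  have h_lip : LipschitzWith (∑ i, ‖(a i).contLinear‖₊) fun y ↦ ⨆ i, a i y :=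
    lipschitzWith_iSup_of_finite fun i ↦ (lipschitzWith_nnnorm_contLinear (a i)).weaken
      (Finset.single_le_sum (f := fun i ↦ ‖(a i).contLinear‖₊) (fun _ _ ↦ zero_le)
        (Finset.mem_univ i))
  calc ∑ i, (w i).toReal * a i (x i) ≤ ∑ i, (w i).toReal * ⨆ j, a j (x i) := by
        refine Finset.sum_le_sum fun i _ ↦ mul_le_mul_of_nonneg_left ?_ ENNReal.toReal_nonneg
        exact le_ciSup (Set.finite_range fun j ↦ a j (x i)).bddAbove i
    _ = ∫ y, ⨆ j, a j y ∂(∑ i, w i • Measure.dirac (x i)) :=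
        (integral_sum_smul_dirac _ (fun i _ ↦ hw i) x h_lip.continuous.stronglyMeasurable).symm
    _ ≤ ∫ y, ⨆ j, a j y ∂γ :=
        h_cx _ ⟨_, h_lip⟩ (convexOn_iSup_of_finite fun i ↦ convexOn_univ_continuousAffineMap _)

theorem exists_sum_measure_eq_forall_integral_affine [BorelSpace B] [IsFiniteMeasure γ]
    (hγ : Integrable (fun y ↦ y) γ) {w : ι → ℝ≥0∞} (hw : ∀ i, w i ≠ ∞) {x : ι → B}
    (h_cx : ConvexOrderLE (∑ i, w i • Measure.dirac (x i)) γ) :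
    ∃ μ : ι → Measure B, ∑ i, μ i = γ ∧
      ∀ i, ∀ a : B →ᴬ[ℝ] ℝ, ∫ y, a y ∂μ i = (w i).toReal * a (x i) := by
  classical
  let A : (ι → B →ᴬ[ℝ] ℝ) →ₗ[ℝ] ι → B → ℝ :=
    { toFun v i := v i
      map_add' _ _ := rfl
      map_smul' _ _ := rfl }
  let c : (ι → B →ᴬ[ℝ] ℝ) →ₗ[ℝ] ℝ :=
    { toFun v := ∑ i, (w i).toReal * v i (x i)
      map_add' v v' := by simp [mul_add, Finset.sum_add_distrib]
      map_smul' r v := by simp [Finset.mul_sum, mul_left_comm] }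
  obtain ⟨μ, hμ_sum, hμ⟩ := exists_sum_measure_eq_of_le_integral_iSup A
    (fun v i ↦ integrable_comp_of_lipschitzWith (lipschitzWith_nnnorm_contLinear (v i)) hγ) c
    (sum_mul_le_integral_iSup_of_convexOrderLE hw h_cx)
  refine ⟨μ, hμ_sum, fun i a ↦ ?_⟩
  have h_single : ∑ j, (w j).toReal * (Pi.single i a : ι → B →ᴬ[ℝ] ℝ) j (x j) =
      ∑ j, ∫ y, (Pi.single i a : ι → B →ᴬ[ℝ] ℝ) j y ∂μ j := hμ (Pi.single i a)
  rw [Finset.sum_eq_single i (fun j _ hji ↦ by simp [hji]) (by simp), Pi.single_eq_same,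
    Finset.sum_eq_single i (fun j _ hji ↦ by simp [hji]) (by simp), Pi.single_eq_same] at h_single
  exact h_single.symm

theorem measure_univ_eq_and_integral_id_eq_of_forall_affine [OpensMeasurableSpace B]
    [CompleteSpace B] {μ : Measure B} [IsFiniteMeasure μ] (hμ : Integrable (fun y ↦ y) μ)
    {w : ℝ≥0∞} (hw : w ≠ ∞) {x : B} (h : ∀ a : B →ᴬ[ℝ] ℝ, ∫ y, a y ∂μ = w.toReal * a x) :
    μ Set.univ = w ∧ ∫ y, y ∂μ = w.toReal • x := by
  constructor
  · rw [← ENNReal.toReal_eq_toReal_iff' (measure_ne_top μ _) hw]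
    simpa [Measure.real] using h (ContinuousAffineMap.const ℝ B 1)
  · rw [SeparatingDual.eq_iff_forall_dual_eq (R := ℝ)]
    intro l
    rw [← l.integral_comp_comm hμ, map_smul, smul_eq_mul]
    exact h l.toContinuousAffineMap

theorem exists_sum_measure_eq_forall_mean_eq [BorelSpace B] [CompleteSpace B] [IsFiniteMeasure γ]
    (hγ : Integrable (fun y ↦ y) γ) {w : ι → ℝ≥0∞} (hw : ∀ i, w i ≠ ∞) {x : ι → B}
    (h_cx : ConvexOrderLE (∑ i, w i • Measure.dirac (x i)) γ) :
    ∃ μ : ι → Measure B, ∑ i, μ i = γ ∧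
      ∀ i, μ i Set.univ = w i ∧ ∫ y, y ∂μ i = (w i).toReal • x i := by
  obtain ⟨μ, hμ_sum, hμ⟩ := exists_sum_measure_eq_forall_integral_affine hγ hw h_cx
  have hμ_le (i : ι) : μ i ≤ γ := by
    rw [← hμ_sum]
    exact Finset.single_le_sum (fun _ _ ↦ Measure.zero_le _) (Finset.mem_univ i)
  have (i : ι) : IsFiniteMeasure (μ i) := isFiniteMeasure_of_le γ (hμ_le i)
  exact ⟨μ, hμ_sum, fun i ↦
    measure_univ_eq_and_integral_id_eq_of_forall_affine (hγ.mono_measure (hμ_le i)) (hw i) (hμ i)⟩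

end FiniteStrassen

section Coupling

variable {α β ι : Type*} [MeasurableSpace α] [MeasurableSpace β]

theorem measurable_invFun_of_countable [MeasurableSingletonClass α] [Countable ι] [Nonempty ι]
    [MeasurableSpace ι] (x : ι → α) : Measurable (Function.invFun x) := by
  refine (measurable_const (a := Classical.arbitrary ι)).measurable_of_countable_ne
    ((Set.countable_range x).mono fun b hb ↦ ?_)
  by_contra hb_range
  exact hb (Function.invFun_neg hb_range).symm

theorem restrict_sum_dirac_prod [Fintype ι] [MeasurableSpace ι] [MeasurableSingletonClass ι]
    {x : ι → α} {k : α → ι} (hk : Measurable k) (hkx : Function.LeftInverse k x)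
    (μ : ι → Measure β) [∀ i, SFinite (μ i)] (i : ι) :
    (∑ j, (Measure.dirac (x j)).prod (μ j)).restrict ((k ⁻¹' {i}) ×ˢ Set.univ) =
      (Measure.dirac (x i)).prod (μ i) := by
  classical
  have hP : MeasurableSet (k ⁻¹' {i}) := hk (measurableSet_singleton i)
  have h_restrict (j : ι) :
      ((Measure.dirac (x j)).prod (μ j)).restrict ((k ⁻¹' {i}) ×ˢ Set.univ) =
        if j = i then (Measure.dirac (x j)).prod (μ j) else 0 := by
    rw [← Measure.prod_restrict, Measure.restrict_univ, restrict_dirac' hP]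
    simp only [Set.mem_preimage, hkx j, Set.mem_singleton_iff]
    split_ifs <;> simp
  rw [← Measure.sum_fintype, Measure.restrict_sum _ (hP.prod .univ), Measure.sum_fintype]
  simp only [h_restrict, Finset.sum_ite_eq', Finset.mem_univ, if_true]

theorem isBarycentricQuantisation_sum_smul_dirac {B : Type*} [NormedAddCommGroup B]
    [NormedSpace ℝ B] [MeasurableSpace B] [MeasurableSingletonClass B] {n : ℕ} {x : Fin n → B}
    (hx : Function.Injective x) {w : Fin n → ℝ≥0∞} {μ : Fin n → Measure B}
    [IsProbabilityMeasure (∑ i, μ i)] (hμ_univ : ∀ i, μ i Set.univ = w i)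
    (hμ_mean : ∀ i, ∫ y, y ∂μ i = (w i).toReal • x i) :
    IsBarycentricQuantisation (∑ i, w i • Measure.dirac (x i)) (∑ i, μ i) := by
  let π : Measure (B × B) := ∑ i, (Measure.dirac (x i)).prod (μ i)
  have : Nonempty (Fin n) := Finset.univ_nonempty_iff.1
    (Finset.nonempty_of_sum_ne_zero (IsProbabilityMeasure.ne_zero (∑ i, μ i)))
  let P (i : Fin n) : Set B := Function.invFun x ⁻¹' {i}
  have h_finite (i : Fin n) : IsFiniteMeasure (μ i) :=
    isFiniteMeasure_of_le (∑ j, μ j)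
      (Finset.single_le_sum (fun _ _ ↦ Measure.zero_le _) (Finset.mem_univ i))
  have h_inv : Measurable (Function.invFun x) := measurable_invFun_of_countable x
  have hπ_snd : π.snd = ∑ i, μ i := by
    simp only [π, ← Measure.sum_fintype, Measure.snd_sum, Measure.snd_prod]
  have hπ_restrict (i : Fin n) :
      π.restrict (P i ×ˢ Set.univ) = (Measure.dirac (x i)).prod (μ i) :=
    restrict_sum_dirac_prod h_inv (Function.leftInverse_invFun hx) μ i
  have hπ_cell (i : Fin n) : π (P i ×ˢ Set.univ) = w i := by
    rw [← Measure.restrict_apply_univ, hπ_restrict, ← Set.univ_prod_univ, Measure.prod_prod,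
      measure_univ, one_mul, hμ_univ]
  refine ⟨π, ⟨by rw [← Measure.snd_univ, hπ_snd, measure_univ]⟩, hπ_snd, n, P,
    fun i ↦ h_inv (measurableSet_singleton i),
    fun i j hij ↦ (Set.disjoint_singleton.2 hij).preimage _,
    Set.eq_univ_of_forall fun b ↦ Set.mem_iUnion.2 ⟨_, rfl⟩, x, fun i hi ↦ ?_, ?_⟩
  · rw [hπ_cell] at hi
    have hw : w i ≠ ∞ := hμ_univ i ▸ measure_ne_top (μ i) _
    rw [hπ_cell, hπ_restrict, integral_fun_snd fun y : B ↦ y, hμ_mean, probReal_univ, one_smul,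
      inv_smul_smul₀ (ENNReal.toReal_ne_zero.2 ⟨hi, hw⟩)]
  · simp only [hπ_cell]
    symm
    refine Finset.sum_filter_of_ne fun i _ hi h_zero ↦ hi ?_
    rw [h_zero, zero_smul]

end Coupling

section Jensen

theorem sum_measureReal_mul_setAverage_le_integral {Ω E ι : Type*} [MeasurableSpace Ω]
    {μ : Measure Ω} [IsFiniteMeasure μ] [NormedAddCommGroup E] [NormedSpace ℝ E] [CompleteSpace E]
    [Fintype ι] {C : ι → Set Ω} (hC : ∀ i, MeasurableSet (C i))
    (hC_disj : Pairwise (Function.onFun Disjoint C)) (hC_univ : ⋃ i, C i = Set.univ)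
    {s : Set E} {f : E → ℝ} (hf : ConvexOn ℝ s f) (hf_cont : ContinuousOn f s) (hs : IsClosed s)
    {Y : Ω → E} (hY_mem : ∀ᵐ ω ∂μ, Y ω ∈ s) (hY : Integrable Y μ)
    (hfY : Integrable (fun ω ↦ f (Y ω)) μ) :
    ∑ i, μ.real (C i) * f (⨍ ω in C i, Y ω ∂μ) ≤ ∫ ω, f (Y ω) ∂μ := by
  calc ∑ i, μ.real (C i) * f (⨍ ω in C i, Y ω ∂μ) ≤ ∑ i, ∫ ω in C i, f (Y ω) ∂μ := by
        refine Finset.sum_le_sum fun i _ ↦ ?_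
        by_cases hi : μ (C i) = 0
        · simp [Measure.real, hi, Measure.restrict_eq_zero.2 hi]
        have h_jensen := hf.map_set_average_le hf_cont hs hi (measure_ne_top μ _)
          (ae_restrict_of_ae hY_mem) hY.integrableOn hfY.integrableOn
        rw [setAverage_eq _ fun ω ↦ f (Y ω), smul_eq_mul] at h_jensen
        exact (le_inv_mul_iff₀ (ENNReal.toReal_pos hi (measure_ne_top μ _))).1 h_jensen
    _ = ∫ ω, f (Y ω) ∂μ := by
        rw [← integral_iUnion_fintype hC hC_disj fun i ↦ hfY.integrableOn, hC_univ,
          setIntegral_univ]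

variable {B : Type*} [NormedAddCommGroup B] [NormedSpace ℝ B] [MeasurableSpace B]
    {ζ γ : Measure B}

theorem IsBarycentricQuantisation.exists_finset_compl_null [MeasurableSingletonClass B]
    (h : IsBarycentricQuantisation ζ γ) : ∃ s : Finset B, ζ (↑s)ᶜ = 0 := by
  classical
  obtain ⟨π, -, -, n, P, -, -, -, y, -, rfl⟩ := h
  refine ⟨Finset.univ.image y, ?_⟩
  rw [Measure.finsetSum_apply]
  refine Finset.sum_eq_zero fun i _ ↦ ?_
  rw [Measure.smul_apply, Measure.dirac_apply' _ (Finset.measurableSet _).compl]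
  simp

theorem IsBarycentricQuantisation.convexOrderLE [CompleteSpace B] [BorelSpace B]
    (h : IsBarycentricQuantisation ζ γ) (hγ : Integrable (fun y ↦ y) γ) : ConvexOrderLE ζ γ := by
  obtain ⟨π, hπ, rfl, n, P, hP, hP_disj, hP_univ, y, hy, rfl⟩ := h
  rintro f ⟨K, hf_lip⟩ hf_cvx
  have h_snd : Integrable (fun q : B × B ↦ q.2) π := hγ.comp_measurable measurable_snd
  have hP_cover : ⋃ i, P i ×ˢ (Set.univ : Set B) = Set.univ := by
    rw [← Set.iUnion_prod_const, hP_univ, Set.univ_prod_univ]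
  rw [integral_sum_smul_dirac _ (fun i _ ↦ measure_ne_top π _) y
    hf_lip.continuous.stronglyMeasurable]
  calc ∑ i with π (P i ×ˢ Set.univ) ≠ 0, (π (P i ×ˢ Set.univ)).toReal • f (y i)
      = ∑ i with π (P i ×ˢ Set.univ) ≠ 0,
          π.real (P i ×ˢ Set.univ) * f (⨍ q in P i ×ˢ Set.univ, q.2 ∂π) := by
        refine Finset.sum_congr rfl fun i hi ↦ ?_
        rw [setAverage_eq, Measure.real, ← hy i (Finset.mem_filter.1 hi).2, smul_eq_mul]
    _ = ∑ i, π.real (P i ×ˢ Set.univ) * f (⨍ q in P i ×ˢ Set.univ, q.2 ∂π) :=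
        Finset.sum_filter_of_ne fun i _ hi h_zero ↦ hi (by rw [Measure.real, h_zero]; simp)
    _ ≤ ∫ q, f q.2 ∂π :=
        sum_measureReal_mul_setAverage_le_integral (fun i ↦ (hP i).prod .univ)
          (fun i j hij ↦ Set.disjoint_prod.2 (.inl (hP_disj hij))) hP_cover hf_cvx
          hf_lip.continuous.continuousOn isClosed_univ (by simp) h_snd
          (integrable_comp_of_lipschitzWith hf_lip h_snd)
    _ = ∫ x, f x ∂π.snd :=
        (integral_map measurable_snd.aemeasurable hf_lip.continuous.aestronglyMeasurable).symm

end Jensen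

theorem exists_injective_eq_sum_smul_dirac {α : Type*} [MeasurableSpace α]
    [MeasurableSingletonClass α] {ζ : Measure α} {s : Finset α} (hs : ζ (↑s)ᶜ = 0) :
    ∃ x : Fin s.card → α, Function.Injective x ∧ ζ = ∑ i, ζ {x i} • Measure.dirac (x i) := by
  refine ⟨fun i ↦ s.equivFin.symm i,
    Subtype.val_injective.comp s.equivFin.symm.injective, ?_⟩
  rw [Equiv.sum_comp s.equivFin.symm fun b : s ↦ ζ {(b : α)} • Measure.dirac (b : α),
    Finset.sum_coe_sort s fun b ↦ ζ {b} • Measure.dirac b]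
  exact Measure.ae_mem_finset_iff.1 hs

section General

variable {B : Type*} [NormedAddCommGroup B] [NormedSpace ℝ B] [CompleteSpace B]
  [MeasurableSpace B] [BorelSpace B] {ζ γ : Measure B}

theorem ConvexOrderLE.isBarycentricQuantisation [IsProbabilityMeasure ζ] [IsProbabilityMeasure γ]
    (h : ConvexOrderLE ζ γ) (hγ : Integrable (fun y ↦ y) γ) {s : Finset B} (hs : ζ (↑s)ᶜ = 0) :
    IsBarycentricQuantisation ζ γ := by
  obtain ⟨x, hx, hζ⟩ := exists_injective_eq_sum_smul_dirac hs
  have : Nonempty (Fin s.card) := Finset.univ_nonempty_iff.1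
    (Finset.nonempty_of_sum_ne_zero (hζ ▸ IsProbabilityMeasure.ne_zero ζ))
  rw [hζ] at h ⊢
  obtain ⟨μ, rfl, hμ⟩ :=
    exists_sum_measure_eq_forall_mean_eq hγ (fun i ↦ measure_ne_top ζ {x i}) h
  exact isBarycentricQuantisation_sum_smul_dirac hx (fun i ↦ (hμ i).1) fun i ↦ (hμ i).2

theorem convex_order_finitely_supported_iff_barycentric_quantisation_general
    (ζ γ : Measure B) [IsProbabilityMeasure ζ] [IsProbabilityMeasure γ]
    (hγ1 : Integrable (fun x ↦ x) γ) :
    (ConvexOrderLE ζ γ ∧ ∃ s : Finset B, ζ (↑s)ᶜ = 0) ↔ IsBarycentricQuantisation ζ γ :=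
  ⟨fun ⟨h_cx, _, hs⟩ ↦ h_cx.isBarycentricQuantisation hγ1 hs,
    fun h ↦ ⟨h.convexOrderLE hγ1, h.exists_finset_compl_null⟩⟩

end General

theorem convex_order_finitely_supported_iff_barycentric_quantisation
    {B : Type*} [NormedAddCommGroup B] [NormedSpace ℝ B] [CompleteSpace B]
    [MeasurableSpace B] [BorelSpace B] [SecondCountableTopology B]
    (ζ γ : Measure B) [IsProbabilityMeasure ζ] [IsProbabilityMeasure γ]
    (hζ1 : Integrable (fun x => x) ζ) (hγ1 : Integrable (fun x => x) γ) :
    ((∀ f : B → ℝ, (∃ K, LipschitzWith K f) → ConvexOn ℝ Set.univ f →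
        ∫ x, f x ∂ζ ≤ ∫ x, f x ∂γ) ∧ ∃ s : Finset B, ζ (↑s)ᶜ = 0) ↔
      ∃ π : Measure (B × B), IsProbabilityMeasure π ∧ π.snd = γ ∧
        ∃ n : ℕ, ∃ P : Fin n → Set B, (∀ i, MeasurableSet (P i)) ∧
          Pairwise (Function.onFun Disjoint P) ∧ (⋃ i, P i = Set.univ) ∧
          ∃ y : Fin n → B,
            (∀ i, π (P i ×ˢ Set.univ) ≠ 0 →
              y i = (π (P i ×ˢ Set.univ)).toReal⁻¹ •
                ∫ q in P i ×ˢ (Set.univ : Set B), q.2 ∂π) ∧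
            ζ = ∑ i ∈ Finset.univ.filter (fun i => π (P i ×ˢ Set.univ) ≠ 0),
              π (P i ×ˢ Set.univ) • Measure.dirac (y i) :=
  convex_order_finitely_supported_iff_barycentric_quantisation_general ζ γ hγ1
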